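/- Suppose the LP relaxation of maximum weight matching on G is pointed, i.e. it has a unique half-integral optimum x* whose weight exceeds that of every other half-integral feasible point by some ε > 0. Let (α, m, γ) be a fixed point of the natural dynamics. Then γ is an optimal solution of the dual LP of maximum weight matching: γ is dual feasible and Σ_{i∈V} γ_i equals the minimum value of the dual LP (equivalently, Σ_{i∈V} γ_i = Σ_{e∈E} w_e x*_e). -/

import Mathlib

open Finset Filter Topology

/-- The offer `m_{i→j}` computed from message vector `α`:
`m_{i→j} = (w_{ij} − α_{i→j})₊ − (1/2)(w_{ij} − α_{i→j} − α_{j→i})₊`. -/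
noncomputable def offer {V : Type*} (w α : V → V → ℝ) (i j : V) : ℝ :=
  max (w i j - α i j) 0 - (1 / 2) * max (w i j - α i j - α j i) 0

/-- `max_{k ∈ ∂i ∖ {j}} m_{k→i}` (max over the empty set is 0). -/
noncomputable def bestAlt {V : Type*} [Fintype V] [DecidableEq V]
    (Adj : V → V → Prop) [DecidableRel Adj] (w α : V → V → ℝ) (i j : V) : ℝ :=
  (Finset.univ.filter fun k => Adj i k ∧ k ≠ j).fold max 0 fun k => offer w α k i

/-- Earnings `γ_i = max_{k ∈ ∂i} m_{k→i}` (max over the empty set is 0). -/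
noncomputable def earn {V : Type*} [Fintype V]
    (Adj : V → V → Prop) [DecidableRel Adj] (w α : V → V → ℝ) (i : V) : ℝ :=
  (Finset.univ.filter fun k => Adj i k).fold max 0 fun k => offer w α k i

/-- One step of the natural dynamics with damping factor `κ`:
`α'_{i→j} = κ · max_{k∈∂i∖{j}} m_{k→i} + (1−κ) · α_{i→j}`. -/
noncomputable def step {V : Type*} [Fintype V] [DecidableEq V]
    (Adj : V → V → Prop) [DecidableRel Adj] (w : V → V → ℝ) (κ : ℝ)
    (α : V → V → ℝ) : V → V → ℝ :=
  fun i j => κ * bestAlt Adj w α i j + (1 - κ) * α i j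

/-- A fixed point of the natural dynamics: the message vector is unchanged by the update. -/
def IsFixedPoint {V : Type*} [Fintype V] [DecidableEq V]
    (Adj : V → V → Prop) [DecidableRel Adj] (w : V → V → ℝ) (κ : ℝ)
    (α : V → V → ℝ) : Prop :=
  ∀ i j, Adj i j → step Adj w κ α i j = α i j

/-- `W`, the maximum edge weight. -/
noncomputable def maxW {V : Type*} [Fintype V]
    (Adj : V → V → Prop) [DecidableRel Adj] (w : V → V → ℝ) : ℝ :=
  ((Finset.univ ×ˢ Finset.univ).filter fun p : V × V => Adj p.1 p.2).fold max 0
    fun p => w p.1 p.2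

/-- A valid message vector: `α ∈ [0, W]^{2|E|}`. -/
def ValidMsg {V : Type*} [Fintype V]
    (Adj : V → V → Prop) [DecidableRel Adj] (w : V → V → ℝ) (α : V → V → ℝ) : Prop :=
  ∀ i j, Adj i j → α i j ∈ Set.Icc (0 : ℝ) (maxW Adj w)

/-- `G = (V, E)` is a finite simple graph with symmetric positive edge weights. -/
def GoodGraph {V : Type*} (Adj : V → V → Prop) (w : V → V → ℝ) : Prop :=
  (∀ i j, Adj i j → Adj j i) ∧ (∀ i, ¬Adj i i) ∧ (∀ i j, w i j = w j i) ∧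
  (∀ i j, Adj i j → 0 < w i j)

/-- Feasibility for the LP relaxation of maximum weight matching:
`x` symmetric, `x_{ij} ≥ 0` on edges, and `∑_{j∈∂i} x_{ij} ≤ 1` at every node. -/
def LPFeasible {V : Type*} [Fintype V]
    (Adj : V → V → Prop) [DecidableRel Adj] (x : V → V → ℝ) : Prop :=
  (∀ i j, x i j = x j i) ∧ (∀ i j, Adj i j → 0 ≤ x i j) ∧
  (∀ i, ∑ j ∈ Finset.univ.filter (fun j => Adj i j), x i j ≤ 1)

/-- The LP objective `∑_{(i,j)∈E} w_{ij} x_{ij}` (each undirected edge counted once,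
i.e. half the sum over ordered pairs). -/
noncomputable def LPobj {V : Type*} [Fintype V]
    (Adj : V → V → Prop) [DecidableRel Adj] (w x : V → V → ℝ) : ℝ :=
  (1 / 2) * ∑ p ∈ (Finset.univ ×ˢ Finset.univ).filter (fun p : V × V => Adj p.1 p.2),
    w p.1 p.2 * x p.1 p.2

theorem offer_tight {V : Type*} (w α : V → V → ℝ) (i j : V)
    (hw : w i j = w j i) (hi : 0 ≤ α i j) (hj : 0 ≤ α j i) (h : α i j + α j i ≤ w i j) :
    offer w α j i = (w i j + α i j - α j i) / 2 := by
  unfold offer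
  rw [← hw, max_eq_left (by linarith), max_eq_left (by linarith)]; ring

theorem offer_loose {V : Type*} (w α : V → V → ℝ) (i j : V)
    (hw : w i j = w j i) (h : w i j < α i j + α j i) :
    offer w α j i = max (w i j - α j i) 0 := by
  unfold offer
  rw [← hw, max_eq_right (b := (0:ℝ)) (a := w i j - α j i - α i j) (by linarith)]; ring

section FP
variable {V : Type*} [Fintype V] [DecidableEq V]
    (Adj : V → V → Prop) [DecidableRel Adj] (w : V → V → ℝ) (α : V → V → ℝ)

theorem offer_le_earn {i k : V} (h : Adj i k) : offer w α k i ≤ earn Adj w α i := by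
  unfold earn
  exact (Finset.le_fold_max _).2 (Or.inr ⟨k, by simpa using h, le_rfl⟩)

theorem earn_nonneg (i : V) : 0 ≤ earn Adj w α i := by
  unfold earn
  exact (Finset.le_fold_max _).2 (Or.inl le_rfl)

theorem offer_le_bestAlt {i j k : V} (h : Adj i k) (hk : k ≠ j) :
    offer w α k i ≤ bestAlt Adj w α i j := by
  unfold bestAlt
  exact (Finset.le_fold_max _).2 (Or.inr ⟨k, by simp [h, hk], le_rfl⟩)

theorem bestAlt_le_earn (i j : V) : bestAlt Adj w α i j ≤ earn Adj w α i := by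
  unfold bestAlt
  refine (Finset.fold_max_le _).2 ⟨earn_nonneg Adj w α i, fun k hk => ?_⟩
  simp at hk
  exact offer_le_earn Adj w α hk.1

theorem exists_earn {i : V} (h : 0 < earn Adj w α i) :
    ∃ k, Adj i k ∧ offer w α k i = earn Adj w α i := by
  have h2 : earn Adj w α i ≤ earn Adj w α i := le_rfl
  conv at h2 => rhs; unfold earn
  rcases (Finset.le_fold_max _).1 h2 with h3 | ⟨k, hk, h3⟩
  · linarith
  · simp at hk
    exact ⟨k, hk, le_antisymm (offer_le_earn Adj w α hk) h3⟩

theorem exists_bestAlt {i j : V} (h : 0 < bestAlt Adj w α i j) :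
    ∃ k, Adj i k ∧ k ≠ j ∧ offer w α k i = bestAlt Adj w α i j := by
  have h2 : bestAlt Adj w α i j ≤ bestAlt Adj w α i j := le_rfl
  conv at h2 => rhs; unfold bestAlt
  rcases (Finset.le_fold_max _).1 h2 with h3 | ⟨k, hk, h3⟩
  · linarith
  · simp at hk
    exact ⟨k, hk.1, hk.2, le_antisymm (offer_le_bestAlt Adj w α hk.1 hk.2) h3⟩

theorem earn_le {i j : V} :
    earn Adj w α i ≤ max (bestAlt Adj w α i j) (offer w α j i) := by
  have h0 : 0 ≤ bestAlt Adj w α i j := by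
    unfold bestAlt
    exact (Finset.le_fold_max _).2 (Or.inl le_rfl)
  conv => lhs; unfold earn
  refine (Finset.fold_max_le _).2 ⟨le_max_of_le_left h0, fun k hk => ?_⟩
  simp at hk
  by_cases hkj : k = j
  · subst hkj; exact le_max_right _ _
  · exact le_max_of_le_left (offer_le_bestAlt Adj w α hk hkj)

/-- Structural facts about fixed points. -/
theorem fp_facts (hG : GoodGraph Adj w) (hnn : ∀ i j, Adj i j → 0 ≤ α i j)
    (hb : ∀ i j, Adj i j → bestAlt Adj w α i j = α i j) :
    (∀ i j, Adj i j → w i j ≤ earn Adj w α i + earn Adj w α j) ∧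
    (∀ i, 0 < earn Adj w α i → ∃ j, Adj i j ∧ earn Adj w α i + earn Adj w α j ≤ w i j) ∧
    (∀ i j k, Adj i j → α i j + α j i < w i j → Adj i k →
      earn Adj w α i + earn Adj w α k ≤ w i k → k = j) ∧
    (∀ i j, 0 < earn Adj w α i → Adj i j → earn Adj w α i + earn Adj w α j ≤ w i j →
      ¬ (α i j + α j i < w i j) →
      ∃ k, k ≠ j ∧ Adj i k ∧ earn Adj w α i + earn Adj w α k ≤ w i k) := by
  obtain ⟨hsym, -, hws, hpos⟩ := hG
  have hγ : ∀ i j, Adj i j → earn Adj w α i = max (α i j) (offer w α j i) := by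
    intro i j h
    apply le_antisymm
    · rw [← hb i j h]; exact earn_le Adj w α
    · exact max_le (by rw [← hb i j h]; exact bestAlt_le_earn Adj w α i j)
        (offer_le_earn Adj w α h)
  have ht : ∀ i j, Adj i j → α i j + α j i ≤ w i j →
      earn Adj w α i = (w i j + α i j - α j i) / 2 ∧
      offer w α j i = (w i j + α i j - α j i) / 2 := by
    intro i j h hle
    have := offer_tight w α i j (hws i j) (hnn i j h) (hnn j i (hsym i j h)) hle
    refine ⟨?_, this⟩
    rw [hγ i j h, this, max_eq_right (by linarith)]
  have hl : ∀ i j, Adj i j → w i j < α i j + α j i →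
      earn Adj w α i = α i j ∧ offer w α j i = max (w i j - α j i) 0 := by
    intro i j h hle
    have := offer_loose w α i j (hws i j) hle
    refine ⟨?_, this⟩
    rw [hγ i j h, this, max_eq_left]
    exact max_le (by linarith) (hnn i j h)
  have hT : ∀ i j, Adj i j → α i j + α j i ≤ w i j →
      earn Adj w α i + earn Adj w α j = w i j := by
    intro i j h hle
    have h1 := (ht i j h hle).1
    have h2 := (ht j i (hsym i j h) (by rw [← hws i j]; linarith)).1
    rw [← hws i j] at h2
    linarith
  have hL : ∀ i j, Adj i j → w i j < α i j + α j i →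
      w i j < earn Adj w α i + earn Adj w α j := by
    intro i j h hle
    have h1 := (hl i j h hle).1
    have h2 := (hl j i (hsym i j h) (by rw [← hws i j]; linarith)).1
    linarith
  have hTi : ∀ i j, Adj i j → earn Adj w α i + earn Adj w α j ≤ w i j →
      α i j + α j i ≤ w i j := by
    intro i j h hle
    by_contra hc
    have := hL i j h (not_le.1 hc)
    linarith
  have hE : ∀ i k, Adj i k → 0 < earn Adj w α i → offer w α k i = earn Adj w α i →
      earn Adj w α i + earn Adj w α k ≤ w i k := by
    intro i k h h0 he
    refine (hT i k h ?_).le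
    by_contra hc
    obtain ⟨h1, h2⟩ := hl i k h (not_le.1 hc)
    rw [he] at h2
    rcases le_total (w i k - α k i) 0 with h3 | h3
    · rw [max_eq_right h3] at h2; linarith
    · rw [max_eq_left h3] at h2; linarith
  refine ⟨?_, ?_, ?_, ?_⟩
  · intro i j h
    rcases le_or_gt (α i j + α j i) (w i j) with h1 | h1
    · exact (hT i j h h1).ge
    · exact (hL i j h h1).le
  · intro i h
    obtain ⟨k, hk, he⟩ := exists_earn Adj w α h
    exact ⟨k, hk, hE i k hk h he⟩
  · intro i j k hij hs hik hk
    by_contra hne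
    have h1 := ht i j hij hs.le
    have h2 := ht i k hik (hTi i k hik hk)
    have h3 := offer_le_bestAlt Adj w α hik (j := j) hne
    rw [hb i j hij] at h3
    linarith
  · intro i j h0 hij h hns
    have h1 := hTi i j hij h
    have h2 := ht i j hij h1
    have h3 : α i j = earn Adj w α i := by linarith
    obtain ⟨k, hk, hkj, he⟩ := exists_bestAlt Adj w α (i := i) (j := j)
      (by rw [hb i j hij, h3]; exact h0)
    rw [hb i j hij, h3] at he
    exact ⟨k, hkj, hk, hE i k hk h0 he⟩

end FP

section LP
variable {V : Type*} [Fintype V]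
    (Adj : V → V → Prop) [DecidableRel Adj]

theorem LPobj_eq (w x : V → V → ℝ) : LPobj Adj w x =
    (1 / 2) * ∑ i, ∑ j, if Adj i j then w i j * x i j else 0 := by
  unfold LPobj
  rw [Finset.sum_filter, Finset.sum_product]

theorem swap_sum (hsym : ∀ i j, Adj i j → Adj j i) (x : V → V → ℝ)
    (hx : ∀ i j, x i j = x j i) (f : V → ℝ) :
    ∑ i, f i * ∑ j ∈ Finset.univ.filter (fun j => Adj i j), x i j =
    LPobj Adj (fun i j => f i + f j) x := by
  rw [LPobj_eq]
  have h1 : ∑ i, f i * ∑ j ∈ Finset.univ.filter (fun j => Adj i j), x i j =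
      ∑ i, ∑ j, if Adj i j then f i * x i j else 0 := by
    refine Finset.sum_congr rfl fun i _ => ?_
    rw [Finset.mul_sum, Finset.sum_filter]
  have h2 : ∑ i, ∑ j, (if Adj i j then f i * x i j else 0) =
      ∑ i, ∑ j, (if Adj i j then f j * x i j else 0) := by
    rw [Finset.sum_comm]
    refine Finset.sum_congr rfl fun i _ => Finset.sum_congr rfl fun j _ => ?_
    have : Adj j i ↔ Adj i j := ⟨hsym _ _, hsym _ _⟩
    simp only [this, hx j i]
  have h3 : ∑ i, ∑ j, (if Adj i j then (f i + f j) * x i j else 0) =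
      ∑ i, ∑ j, (if Adj i j then f i * x i j else 0) +
      ∑ i, ∑ j, (if Adj i j then f j * x i j else 0) := by
    simp only [← Finset.sum_add_distrib]
    refine Finset.sum_congr rfl fun i _ => Finset.sum_congr rfl fun j _ => ?_
    split_ifs <;> ring
  rw [h1, h3, ← h2]; ring

theorem LPobj_mono (w w' x : V → V → ℝ) (hx : ∀ i j, Adj i j → 0 ≤ x i j)
    (h : ∀ i j, Adj i j → w i j ≤ w' i j) : LPobj Adj w x ≤ LPobj Adj w' x := by
  rw [LPobj_eq, LPobj_eq]
  refine mul_le_mul_of_nonneg_left (Finset.sum_le_sum fun i _ => Finset.sum_le_sum fun j _ => ?_)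
    (by norm_num)
  split_ifs with ha
  · exact mul_le_mul_of_nonneg_right (h i j ha) (hx i j ha)
  · exact le_rfl

theorem LPobj_congr (w w' x x' : V → V → ℝ)
    (h : ∀ i j, Adj i j → w i j * x i j = w' i j * x' i j) :
    LPobj Adj w x = LPobj Adj w' x' := by
  rw [LPobj_eq, LPobj_eq]
  congr 1
  refine Finset.sum_congr rfl fun i _ => Finset.sum_congr rfl fun j _ => ?_
  split_ifs with ha
  · exact h i j ha
  · rfl

theorem LPobj_add (w x x' : V → V → ℝ) :
    LPobj Adj w (fun i j => x i j + x' i j) = LPobj Adj w x + LPobj Adj w x' := by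
  simp only [LPobj_eq, ← mul_add, ← Finset.sum_add_distrib]
  congr 1
  refine Finset.sum_congr rfl fun i _ => Finset.sum_congr rfl fun j _ => ?_
  split_ifs with ha
  · ring
  · simp

theorem LPobj_wadd (w w' x : V → V → ℝ) :
    LPobj Adj (fun i j => w i j + w' i j) x = LPobj Adj w x + LPobj Adj w' x := by
  simp only [LPobj_eq, ← mul_add, ← Finset.sum_add_distrib]
  congr 1
  refine Finset.sum_congr rfl fun i _ => Finset.sum_congr rfl fun j _ => ?_
  split_ifs with ha
  · ring
  · simp

theorem LPobj_smul (w x : V → V → ℝ) (c : ℝ) :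
    LPobj Adj w (fun i j => c * x i j) = c * LPobj Adj w x := by
  simp only [LPobj_eq, Finset.mul_sum]
  refine Finset.sum_congr rfl fun i _ => Finset.sum_congr rfl fun j _ => ?_
  split_ifs with ha
  · ring
  · simp

theorem LPobj_wsmul (w x : V → V → ℝ) (c : ℝ) :
    LPobj Adj (fun i j => c * w i j) x = c * LPobj Adj w x := by
  simp only [LPobj_eq, Finset.mul_sum]
  refine Finset.sum_congr rfl fun i _ => Finset.sum_congr rfl fun j _ => ?_
  split_ifs with ha
  · ring
  · simp

theorem LPobj_sum {ι : Type*} (s : Finset ι) (w : V → V → ℝ) (x : ι → V → V → ℝ) :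
    LPobj Adj w (fun i j => ∑ k ∈ s, x k i j) = ∑ k ∈ s, LPobj Adj w (x k) := by
  classical
  induction s using Finset.induction_on with
  | empty => simp [LPobj_eq]
  | insert a s ha ih =>
    rw [Finset.sum_insert ha, ← ih, ← LPobj_add]
    simp only [Finset.sum_insert ha]

theorem LPobj_zero_of_nonneg (w x : V → V → ℝ) (h : ∀ i j, Adj i j → 0 ≤ w i j * x i j)
    (h0 : LPobj Adj w x ≤ 0) : ∀ i j, Adj i j → w i j * x i j = 0 := by
  have hn : ∀ i j, 0 ≤ if Adj i j then w i j * x i j else 0 := by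
    intro i j; split_ifs with ha
    · exact h i j ha
    · exact le_rfl
  rw [LPobj_eq] at h0
  have h1 : ∑ i, ∑ j, (if Adj i j then w i j * x i j else 0) = 0 :=
    le_antisymm (by linarith)
      (Finset.sum_nonneg fun i _ => Finset.sum_nonneg fun j _ => hn i j)
  intro i j ha
  have h2 := (Finset.sum_eq_zero_iff_of_nonneg
    (fun i _ => Finset.sum_nonneg fun j _ => hn i j)).1 h1 i (Finset.mem_univ _)
  have h3 := (Finset.sum_eq_zero_iff_of_nonneg (fun j _ => hn i j)).1 h2 j (Finset.mem_univ _)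
  simpa [ha] using h3

/-- Weak duality. -/
theorem weak_duality (hsym : ∀ i j, Adj i j → Adj j i) (w x : V → V → ℝ)
    (hx : LPFeasible Adj x) (y : V → ℝ) (hy : ∀ i, 0 ≤ y i)
    (hyw : ∀ i j, Adj i j → w i j ≤ y i + y j) : LPobj Adj w x ≤ ∑ i, y i := by
  refine (LPobj_mono Adj w _ x hx.2.1 hyw).trans ?_
  rw [← swap_sum Adj hsym x hx.1 y]
  exact Finset.sum_le_sum fun i _ => mul_le_of_le_one_right (hy i) (hx.2.2 i)

/-- Complementary slackness. -/
theorem compl_slack (hsym : ∀ i j, Adj i j → Adj j i) (w x : V → V → ℝ)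
    (hx : LPFeasible Adj x) (y : V → ℝ) (hy : ∀ i, 0 ≤ y i)
    (hyw : ∀ i j, Adj i j → w i j ≤ y i + y j) (hle : ∑ i, y i ≤ LPobj Adj w x) :
    (∀ i j, Adj i j → 0 < x i j → y i + y j = w i j) ∧
    (∀ i, 0 < y i → ∑ j ∈ Finset.univ.filter (fun j => Adj i j), x i j = 1) := by
  have h1 := swap_sum Adj hsym x hx.1 y
  have h2 := LPobj_mono Adj w _ x hx.2.1 hyw
  have h3 : ∀ i ∈ Finset.univ,
      y i * ∑ j ∈ Finset.univ.filter (fun j => Adj i j), x i j ≤ y i :=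
    fun i _ => mul_le_of_le_one_right (hy i) (hx.2.2 i)
  have h4 := Finset.sum_le_sum h3
  constructor
  · intro i j ha hp
    have h5 : LPobj Adj (fun i j => y i + y j) x =
        LPobj Adj w x + LPobj Adj (fun i j => y i + y j - w i j) x := by
      rw [← LPobj_wadd]; apply LPobj_congr; intros; ring
    have h6 := LPobj_zero_of_nonneg Adj (fun i j => y i + y j - w i j) x
      (fun i j ha => mul_nonneg (by linarith [hyw i j ha]) (hx.2.1 i j ha)) (by linarith) i j ha
    rcases mul_eq_zero.1 h6 with h | h <;> linarith
  · intro i hp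
    have h5 := (Finset.sum_eq_sum_iff_of_le h3).1 (le_antisymm h4 (by linarith)) i
      (Finset.mem_univ i)
    exact (mul_eq_left₀ hp.ne').1 h5

/-- Strong duality. -/
theorem strong_duality (hsym : ∀ i j, Adj i j → Adj j i) (w : V → V → ℝ)
    (hw : ∀ i j, w i j = w j i) (opt : ℝ)
    (hopt : ∀ x, LPFeasible Adj x → LPobj Adj w x ≤ opt) :
    ∃ y : V → ℝ, (∀ i, 0 ≤ y i) ∧ (∀ i j, Adj i j → w i j ≤ y i + y j) ∧ ∑ i, y i ≤ opt := by
  classical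
  let row : (V → V → ℝ) → V → ℝ := fun x i =>
    ∑ j ∈ Finset.univ.filter (fun j => Adj i j), x i j
  let N : Set (V → V → ℝ) := {x | (∀ i j, x i j = x j i) ∧ ∀ i j, Adj i j → 0 ≤ x i j}
  have hN0 : (fun _ _ => 0 : V → V → ℝ) ∈ N := ⟨fun _ _ => rfl, fun _ _ _ => le_rfl⟩
  have hrow0 : ∀ i, row (fun _ _ => 0) i = 0 := fun i => by simp [row]
  have hobj0 : LPobj Adj w (fun _ _ => 0) = 0 := by simp [LPobj_eq]
  have hopt0 : 0 ≤ opt := by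
    rw [← hobj0]; apply hopt
    exact ⟨hN0.1, hN0.2, fun i => by simp⟩
  let A : Set ((V → ℝ) × ℝ) := {p | ∃ x ∈ N, (∀ i, row x i < p.1 i) ∧ p.2 < LPobj Adj w x}
  have hAopen : IsOpen A := by
    have : A = ⋃ x ∈ N, {p : (V → ℝ) × ℝ | (∀ i, row x i < p.1 i) ∧ p.2 < LPobj Adj w x} := by
      ext p; simp only [A, Set.mem_ofPred_eq, Set.mem_iUnion, exists_prop]
    rw [this]
    refine isOpen_biUnion fun x _ => IsOpen.and ?_ ?_
    · rw [Set.ofPred_forall]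
      exact isOpen_iInter_of_finite fun i => isOpen_lt continuous_const (by fun_prop)
    · exact isOpen_lt (by fun_prop) continuous_const
  have hAconv : Convex ℝ A := by
    rintro p ⟨x, hx, hp1, hp2⟩ q ⟨z, hz, hq1, hq2⟩ a b ha hb hab
    refine ⟨fun i j => a * x i j + b * z i j, ⟨?_, ?_⟩, ?_, ?_⟩
    · intro i j; simp only [hx.1 i j, hz.1 i j]
    · intro i j h
      exact add_nonneg (mul_nonneg ha (hx.2 i j h)) (mul_nonneg hb (hz.2 i j h))
    · intro i
      have : row (fun i j => a * x i j + b * z i j) i = a * row x i + b * row z i := by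
        simp [row, Finset.sum_add_distrib, Finset.mul_sum]
      rw [this]
      simp only [Prod.fst_add, Prod.smul_fst, Pi.add_apply, Pi.smul_apply, smul_eq_mul]
      rcases ha.eq_or_lt with h | h
      · have hb1 : b = 1 := by linarith
        rw [← h, hb1]; linarith [hq1 i]
      · have := mul_lt_mul_of_pos_left (hp1 i) h
        have := mul_le_mul_of_nonneg_left (hq1 i).le hb
        linarith
    · rw [LPobj_add, LPobj_smul, LPobj_smul]
      simp only [Prod.snd_add, Prod.smul_snd, smul_eq_mul]
      rcases ha.eq_or_lt with h | h
      · have hb1 : b = 1 := by linarith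
        rw [← h, hb1]; linarith
      · have := mul_lt_mul_of_pos_left hp2 h
        have := mul_le_mul_of_nonneg_left hq2.le hb
        linarith
  have hnot : ((fun _ => 1, opt) : (V → ℝ) × ℝ) ∉ A := by
    rintro ⟨x, hx, h1, h2⟩
    exact absurd (hopt x ⟨hx.1, hx.2, fun i => (h1 i).le⟩) (not_le.2 h2)
  obtain ⟨f, hf⟩ := geometric_hahn_banach_open_point hAconv hAopen hnot
  obtain ⟨l, μ, hfe⟩ : ∃ (l : V → ℝ) (μ : ℝ), ∀ s t, f (s, t) = μ * t - ∑ i, l i * s i := by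
    refine ⟨fun i => - f (Pi.single i 1, 0), f (0, 1), fun s t => ?_⟩
    have h1 : ((s, t) : (V → ℝ) × ℝ) = t • ((0 : V → ℝ), (1 : ℝ)) +
        ∑ i, s i • ((Pi.single i 1 : V → ℝ), (0 : ℝ)) := by
      ext k
      · simp [Prod.fst_sum, Finset.sum_apply, Pi.single_apply]
      · simp [Prod.snd_sum]
    rw [h1, map_add, map_sum]
    simp only [map_smul, smul_eq_mul, neg_mul, Finset.sum_neg_distrib, sub_neg_eq_add]
    rw [mul_comm]
    congr 1
    exact Finset.sum_congr rfl fun i _ => mul_comm _ _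
  have hf' : ∀ s t, (s, t) ∈ A → μ * t - ∑ i, l i * s i < μ * opt - ∑ i, l i := by
    intro s t h
    have := hf _ h
    rw [hfe, hfe] at this
    simpa using this
  have hμ : 0 < μ := by
    have := hf' (fun _ => 1) (-1) ⟨_, hN0, fun i => by rw [hrow0]; norm_num, by
      rw [hobj0]; norm_num⟩
    simp only [mul_one] at this
    by_contra hc
    nlinarith
  have hl : ∀ i, 0 ≤ l i := by
    intro i
    by_contra hc
    push Not at hc
    obtain ⟨s, hs, h2⟩ : ∃ s : ℝ, 0 ≤ s ∧ l i * s = - (μ * (opt + 1)) := by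
      refine ⟨μ * (opt + 1) / (- l i), ?_, ?_⟩
      · apply div_nonneg <;> nlinarith
      · have := hc.ne
        field_simp
    have := hf' (fun k => 1 + if k = i then s else 0) (-1)
      ⟨_, hN0, fun k => by rw [hrow0]; dsimp only; split_ifs <;> linarith, by
        rw [hobj0]; norm_num⟩
    simp only [mul_add, Finset.sum_add_distrib, mul_one, mul_ite, mul_zero,
      Finset.sum_ite_eq', Finset.mem_univ, if_true] at this
    rw [h2] at this
    linarith
  have hL : ∀ x ∈ N, μ * LPobj Adj w x - ∑ i, l i * row x i ≤ μ * opt - ∑ i, l i := by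
    intro x hx
    by_contra hc
    push Not at hc
    have hK : 0 < μ + ∑ i, l i := add_pos_of_pos_of_nonneg hμ (Finset.sum_nonneg fun i _ => hl i)
    obtain ⟨η, hη, hηe⟩ : ∃ η : ℝ, 0 < η ∧ η * (μ + ∑ i, l i) =
        (μ * LPobj Adj w x - ∑ i, l i * row x i) - (μ * opt - ∑ i, l i) :=
      ⟨_, div_pos (sub_pos.2 hc) hK, div_mul_cancel₀ _ hK.ne'⟩
    have := hf' (fun i => row x i + η) (LPobj Adj w x - η)
      ⟨x, hx, fun i => by dsimp only; linarith, by dsimp only; linarith⟩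
    simp only [mul_add, Finset.sum_add_distrib, ← Finset.sum_mul] at this
    linarith
  refine ⟨fun i => l i / μ, fun i => div_nonneg (hl i) hμ.le, ?_, ?_⟩
  · let c : V → V → ℝ := fun i j => μ * w i j + -1 * (l i + l j)
    have hc : ∀ i j, c i j = c j i := fun i j => by simp only [c, hw i j]; ring
    let x : V → V → ℝ := fun i j => max (c i j) 0
    have hLc : ∀ s : ℝ, 0 ≤ s → s * LPobj Adj c x ≤ μ * opt - ∑ i, l i := by
      intro s hs
      have hxN : (fun i j => s * x i j) ∈ N :=
        ⟨fun i j => by simp only [x, hc i j], fun i j _ => mul_nonneg hs (le_max_right _ _)⟩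
      have h1 := hL _ hxN
      have h2 := swap_sum Adj hsym _ hxN.1 l
      change ∑ i, l i * row (fun i j => s * x i j) i = _ at h2
      rw [h2] at h1
      have h3 : LPobj Adj c (fun i j => s * x i j) =
          μ * LPobj Adj w (fun i j => s * x i j) +
          -1 * LPobj Adj (fun i j => l i + l j) (fun i j => s * x i j) := by
        rw [← LPobj_wsmul, ← LPobj_wsmul, ← LPobj_wadd]
      rw [LPobj_smul] at h3
      linarith
    have hnn : ∀ i j, 0 ≤ c i j * x i j := by
      intro i j
      simp only [x]
      rcases le_total (c i j) 0 with h | h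
      · rw [max_eq_right h]; simp
      · rw [max_eq_left h]; exact mul_nonneg h h
    have hQ : LPobj Adj c x ≤ 0 := by
      by_contra hcon
      push Not at hcon
      have h0 := hLc 0 le_rfl
      have h1 := hLc ((μ * opt - ∑ i, l i + 1) / LPobj Adj c x)
        (div_nonneg (by linarith) hcon.le)
      rw [div_mul_cancel₀ _ hcon.ne'] at h1
      linarith
    intro i j ha
    have h1 := LPobj_zero_of_nonneg Adj c x (fun i j _ => hnn i j) hQ i j ha
    have h2 : c i j ≤ 0 := by
      by_contra hcon
      push Not at hcon
      simp only [x] at h1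
      rw [max_eq_left hcon.le] at h1
      nlinarith
    simp only [c] at h2
    rw [← add_div, le_div_iff₀ hμ]
    linarith
  · have := hL _ hN0
    simp only [hobj0, hrow0, mul_zero, Finset.sum_const_zero] at this
    rw [← Finset.sum_div, div_le_iff₀ hμ]
    linarith

end LP

section Half
variable {V : Type*} [Fintype V] [DecidableEq V]
    (Adj : V → V → Prop) [DecidableRel Adj]

/-- Top-left block of a permutation matrix on `V ⊕ V`. -/
noncomputable def pblock (σ : Equiv.Perm (V ⊕ V)) (i j : V) : ℝ :=
  if σ (Sum.inl i) = Sum.inl j then 1 else 0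

theorem pblock_row (σ : Equiv.Perm (V ⊕ V)) (i : V) : ∑ j, pblock σ i j ≤ 1 := by
  unfold pblock
  rcases h : σ (Sum.inl i) with k | k <;> simp

theorem pblock_col (σ : Equiv.Perm (V ⊕ V)) (j : V) : ∑ i, pblock σ i j ≤ 1 := by
  unfold pblock
  have : ∀ i, (σ (Sum.inl i) = Sum.inl j) ↔ (σ.symm (Sum.inl j) = Sum.inl i) := fun i => by
    rw [Equiv.symm_apply_eq]; exact eq_comm
  simp only [this]
  rcases h : σ.symm (Sum.inl j) with k | k <;> simp

theorem pblock_01 (σ : Equiv.Perm (V ⊕ V)) (i j : V) : pblock σ i j = 0 ∨ pblock σ i j = 1 := by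
  unfold pblock; split_ifs <;> simp

theorem pblock_nonneg (σ : Equiv.Perm (V ⊕ V)) (i j : V) : 0 ≤ pblock σ i j := by
  rcases pblock_01 σ i j with h | h <;> rw [h] <;> norm_num

/-- Symmetrized block. -/
noncomputable def sblock (σ : Equiv.Perm (V ⊕ V)) (i j : V) : ℝ :=
  (pblock σ i j + pblock σ j i) / 2

theorem sblock_half (σ : Equiv.Perm (V ⊕ V)) (i j : V) :
    sblock σ i j = 0 ∨ sblock σ i j = 1 / 2 ∨ sblock σ i j = 1 := by
  unfold sblock
  rcases pblock_01 σ i j with h | h <;> rcases pblock_01 σ j i with h' | h' <;>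
    rw [h, h'] <;> norm_num

theorem sblock_feasible (σ : Equiv.Perm (V ⊕ V)) : LPFeasible Adj (sblock σ) := by
  refine ⟨fun i j => by unfold sblock; ring, fun i j _ => ?_, fun i => ?_⟩
  · unfold sblock
    linarith [pblock_nonneg σ i j, pblock_nonneg σ j i]
  · refine (Finset.sum_le_sum_of_subset_of_nonneg (Finset.subset_univ _) ?_).trans ?_
    · intro j _ _
      unfold sblock
      linarith [pblock_nonneg σ i j, pblock_nonneg σ j i]
    · unfold sblock
      rw [← Finset.sum_div, Finset.sum_add_distrib]
      linarith [pblock_row σ i, pblock_col σ i]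

theorem decomp (hsym : ∀ i j, Adj i j → Adj j i) (x : V → V → ℝ) (hx : LPFeasible Adj x) :
    ∃ c : Equiv.Perm (V ⊕ V) → ℝ, (∀ σ, 0 ≤ c σ) ∧ ∑ σ, c σ = 1 ∧
      ∀ w, LPobj Adj w x = ∑ σ, c σ * LPobj Adj w (sblock σ) := by
  let X : Matrix V V ℝ := fun i j => if Adj i j then x i j else 0
  have hXs : ∀ i j, X i j = X j i := by
    intro i j
    have : Adj j i ↔ Adj i j := ⟨hsym _ _, hsym _ _⟩
    simp only [X, this, hx.1 i j]
  have hX0 : ∀ i j, 0 ≤ X i j := by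
    intro i j; simp only [X]; split_ifs with h
    · exact hx.2.1 i j h
    · exact le_rfl
  have hX1 : ∀ i, ∑ j, X i j ≤ 1 := by
    intro i
    have := hx.2.2 i
    rwa [Finset.sum_filter] at this
  let D : Matrix V V ℝ := Matrix.diagonal fun i => 1 - ∑ j, X i j
  have hD0 : ∀ i j, 0 ≤ D i j := by
    intro i j
    simp only [D, Matrix.diagonal_apply]
    split_ifs
    · linarith [hX1 i]
    · exact le_rfl
  have hDr : ∀ i, ∑ j, D i j = 1 - ∑ j, X i j := by
    intro i; simp [D, Matrix.diagonal_apply]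
  have hDc : ∀ j, ∑ i, D i j = 1 - ∑ i, X j i := by
    intro i; simp [D, Matrix.diagonal_apply]
  have hXc : ∀ j, ∑ i, X i j = ∑ i, X j i := fun j => Finset.sum_congr rfl fun i _ => hXs i j
  have hM : Matrix.fromBlocks X D D X ∈ doublyStochastic ℝ (V ⊕ V) := by
    rw [mem_doublyStochastic_iff_sum]
    refine ⟨?_, ?_, ?_⟩
    · rintro (i | i) (j | j) <;> simp [hX0, hD0]
    · rintro (i | i) <;> simp [Fintype.sum_sum_type, hDr]
    · rintro (i | i) <;> simp [Fintype.sum_sum_type, hDc, hXc]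
  obtain ⟨c, hc0, hc1, hc⟩ := exists_eq_sum_perm_of_mem_doublyStochastic hM
  have hcX : ∀ i j, ∑ σ, c σ * pblock σ i j = X i j := by
    intro i j
    have := congrFun (congrFun hc (Sum.inl i)) (Sum.inl j)
    rw [Matrix.fromBlocks_apply₁₁, Matrix.sum_apply] at this
    rw [← this]
    refine Finset.sum_congr rfl fun σ _ => ?_
    simp [pblock, PEquiv.toMatrix_apply, eq_comm]
  refine ⟨c, hc0, hc1, fun w => ?_⟩
  have h1 : ∑ σ, c σ * LPobj Adj w (sblock σ) =
      LPobj Adj w (fun i j => ∑ σ, c σ * sblock σ i j) := by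
    rw [LPobj_sum]
    exact Finset.sum_congr rfl fun σ _ => (LPobj_smul Adj w (sblock σ) (c σ)).symm
  rw [h1]
  apply LPobj_congr
  intro i j ha
  have h2 : ∑ σ, c σ * sblock σ i j = (X i j + X j i) / 2 := by
    rw [← hcX, ← hcX, ← Finset.sum_add_distrib, Finset.sum_div]
    exact Finset.sum_congr rfl fun σ _ => by unfold sblock; ring
  rw [h2, ← hXs i j]
  simp [X, ha]

/-- Reorient between `A` and `B`. -/
noncomputable def reor (A B : V → Prop) (x P : V → V → ℝ) (i j : V) : ℝ :=
  open Classical in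
  if Adj i j then (if A i then P i j else if B i then P j i else x i j) else 0

theorem reor_feasible (hsym : ∀ i j, Adj i j → Adj j i) (x : V → V → ℝ) (hx : LPFeasible Adj x)
    (A B : V → Prop) (hAB : ∀ i, A i → ¬ B i)
    (hA : ∀ i j, A i → Adj i j → x i j ≠ 0 → B j)
    (hB : ∀ i j, B i → Adj i j → x i j ≠ 0 → A j)
    (P : V → V → ℝ) (hP : ∀ i j, P i j = 0 ∨ P i j = 1)
    (hr : ∀ i, ∑ j, P i j ≤ 1) (hc : ∀ j, ∑ i, P i j ≤ 1)
    (hPx : ∀ i j, Adj i j → x i j = (P i j + P j i) / 2) :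
    LPFeasible Adj (reor Adj A B x P) := by
  have hP0 : ∀ i j, 0 ≤ P i j := fun i j => by
    rcases hP i j with h | h <;> rw [h] <;> norm_num
  have hz : ∀ i j, Adj i j → x i j = 0 → P i j = 0 ∧ P j i = 0 := by
    intro i j h h0
    have := hPx i j h
    constructor <;> linarith [hP0 i j, hP0 j i]
  have key : ∀ i j, Adj i j → reor Adj A B x P i j = reor Adj A B x P j i := by
    intro i j h
    have h' := hsym i j h
    simp only [reor, h, h', if_true]
    by_cases h0 : x i j = 0
    · have := hz i j h h0
      rw [hx.1 j i, h0, this.1, this.2]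
      simp
    · have h0' : x j i ≠ 0 := by rwa [hx.1 j i]
      by_cases ai : A i
      · have bj := hA i j ai h h0
        have aj : ¬ A j := fun h => hAB j h bj
        simp [ai, bj, aj]
      · have bj : ¬ B j := fun hb => ai (hB j i hb h' h0')
        by_cases bi : B i
        · have aj := hB i j bi h h0
          simp [ai, bi, aj]
        · have aj : ¬ A j := fun ha => bi (hA j i ha h' h0')
          simp [ai, bi, aj, bj, hx.1 i j]
  refine ⟨fun i j => ?_, fun i j h => ?_, fun i => ?_⟩
  · by_cases h : Adj i j
    · exact key i j h
    · have h' : ¬ Adj j i := fun h' => h (hsym _ _ h')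
      simp [reor, h, h']
  · simp only [reor, h, if_true]
    split_ifs
    · exact hP0 _ _
    · exact hP0 _ _
    · exact hx.2.1 i j h
  · by_cases ai : A i
    · refine le_trans ?_ (hr i)
      rw [Finset.sum_filter]
      refine Finset.sum_le_sum fun j _ => ?_
      simp only [reor, ai, if_true]
      split_ifs
      · exact le_rfl
      · exact hP0 _ _
    · by_cases bi : B i
      · refine le_trans ?_ (hc i)
        rw [Finset.sum_filter]
        refine Finset.sum_le_sum fun j _ => ?_
        simp only [reor, ai, bi, if_true, if_false]
        split_ifs
        · exact le_rfl
        · exact hP0 _ _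
      · refine le_trans (Finset.sum_le_sum fun j hj => ?_) (hx.2.2 i)
        simp at hj
        simp [reor, ai, bi, hj]

theorem no_half (hsym : ∀ i j, Adj i j → Adj j i) (w x : V → V → ℝ) (hx : LPFeasible Adj x)
    (hhalf : ∀ i j, Adj i j → x i j = 0 ∨ x i j = 1 / 2 ∨ x i j = 1)
    (ε : ℝ) (hε : 0 < ε)
    (hopt : ∀ z, LPFeasible Adj z → LPobj Adj w z ≤ LPobj Adj w x)
    (hgap : ∀ z, LPFeasible Adj z →
      (∀ i j, Adj i j → z i j = 0 ∨ z i j = 1 / 2 ∨ z i j = 1) →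
      (∃ i j, Adj i j ∧ z i j ≠ x i j) →
      LPobj Adj w z + ε ≤ LPobj Adj w x)
    (A B : V → Prop) (hAB : ∀ i, A i → ¬ B i)
    (hA : ∀ i j, A i → Adj i j → x i j ≠ 0 → B j)
    (hB : ∀ i j, B i → Adj i j → x i j ≠ 0 → A j) (i j : V) (ai : A i) (hij : Adj i j) :
    x i j ≠ 1 / 2 := by
  obtain ⟨c, hc0, hc1, hc⟩ := decomp Adj hsym x hx
  obtain ⟨σ, hσ⟩ : ∃ σ, ∀ i j, Adj i j → x i j = sblock σ i j := by
    by_contra hcon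
    push Not at hcon
    have h1 : ∀ σ, LPobj Adj w (sblock σ) + ε ≤ LPobj Adj w x := by
      intro σ
      obtain ⟨i, j, h, hne⟩ := hcon σ
      exact hgap _ (sblock_feasible Adj σ) (fun i j _ => sblock_half σ i j) ⟨i, j, h, hne.symm⟩
    have h2 : ∑ σ, c σ * LPobj Adj w (sblock σ) ≤ ∑ σ, c σ * (LPobj Adj w x - ε) :=
      Finset.sum_le_sum fun σ _ =>
        mul_le_mul_of_nonneg_left (by linarith [h1 σ]) (hc0 σ)
    rw [← Finset.sum_mul, hc1, ← hc w] at h2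
    linarith
  intro hx2
  have f1 := reor_feasible Adj hsym x hx A B hAB hA hB (pblock σ) (pblock_01 σ)
    (pblock_row σ) (pblock_col σ) (fun i j h => hσ i j h)
  have f2 := reor_feasible Adj hsym x hx A B hAB hA hB (fun i j => pblock σ j i)
    (fun i j => pblock_01 σ j i) (pblock_col σ) (pblock_row σ)
    (fun i j h => by rw [hσ i j h]; unfold sblock; ring)
  have hs : LPobj Adj w (reor Adj A B x (pblock σ)) +
      LPobj Adj w (reor Adj A B x (fun i j => pblock σ j i)) = 2 * LPobj Adj w x := by
    rw [← LPobj_add, ← LPobj_smul]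
    apply LPobj_congr
    intro i j h
    congr 1
    simp only [reor, h, if_true]
    split_ifs
    · rw [hσ i j h]; unfold sblock; ring
    · rw [hσ i j h]; unfold sblock; ring
    · ring
  have g1 := hopt _ f2
  have g2 := hgap _ f1 (fun i j h => by
    simp only [reor, h, if_true]
    split_ifs
    · rcases pblock_01 σ i j with h | h <;> simp [h]
    · rcases pblock_01 σ j i with h | h <;> simp [h]
    · exact hhalf i j h) ⟨i, j, hij, by
      simp only [reor, hij, ai, if_true]
      rw [hx2]
      rcases pblock_01 σ i j with h | h <;> rw [h] <;> norm_num⟩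
  linarith

/-- A dual optimal solution with strict slack off the support of `x`. -/
theorem strict_dual (hsym : ∀ i j, Adj i j → Adj j i) (w x : V → V → ℝ)
    (hw : ∀ i j, w i j = w j i) (hx : LPFeasible Adj x)
    (ε : ℝ) (hε : 0 < ε)
    (hgap : ∀ z, LPFeasible Adj z →
      (∀ i j, Adj i j → z i j = 0 ∨ z i j = 1 / 2 ∨ z i j = 1) →
      (∃ i j, Adj i j ∧ z i j ≠ x i j) →
      LPobj Adj w z + ε ≤ LPobj Adj w x) :
    ∃ y : V → ℝ, (∀ i, 0 ≤ y i) ∧ (∀ i j, Adj i j → w i j ≤ y i + y j) ∧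
      (∀ i j, Adj i j → x i j = 0 → w i j < y i + y j) ∧ ∑ i, y i ≤ LPobj Adj w x := by
  let n : ℝ := Fintype.card V
  have hn : 0 ≤ n := Nat.cast_nonneg _
  let η : ℝ := ε / (n + 1)
  have hη : 0 < η := div_pos hε (by linarith)
  have hηn : η * n ≤ ε := by
    have : η * (n + 1) = ε := div_mul_cancel₀ _ (by linarith)
    nlinarith
  let v : V → V → ℝ := fun i j => if x i j = 0 then η else 0
  have hv0 : ∀ i j, 0 ≤ v i j := fun i j => by simp only [v]; split_ifs <;> linarith
  have hvx : LPobj Adj (fun i j => w i j + v i j) x = LPobj Adj w x := by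
    apply LPobj_congr
    intro i j _
    simp only [v]
    split_ifs with h <;> simp [h]
  have hbd : ∀ z, LPFeasible Adj z → LPobj Adj v z ≤ ε := by
    intro z hz
    refine (weak_duality Adj hsym v z hz (fun _ => η) (fun _ => hη.le) ?_).trans ?_
    · intro i j _
      simp only [v]; split_ifs <;> linarith
    · simp only [Finset.sum_const, Finset.card_univ, nsmul_eq_mul]
      linarith
  have hop : ∀ z, LPFeasible Adj z → LPobj Adj (fun i j => w i j + v i j) z ≤ LPobj Adj w x := by
    intro z hz
    obtain ⟨c, hc0, hc1, hc⟩ := decomp Adj hsym z hz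
    rw [hc]
    have h1 : ∀ σ, LPobj Adj (fun i j => w i j + v i j) (sblock σ) ≤ LPobj Adj w x := by
      intro σ
      by_cases h : ∃ i j, Adj i j ∧ sblock σ i j ≠ x i j
      · have := hgap _ (sblock_feasible Adj σ) (fun i j _ => sblock_half σ i j) h
        rw [LPobj_wadd]
        linarith [hbd _ (sblock_feasible Adj σ)]
      · push Not at h
        rw [← hvx]
        exact (LPobj_congr Adj _ _ _ _ fun i j ha => by rw [h i j ha]).le
    calc _ ≤ ∑ σ, c σ * LPobj Adj w x :=
          Finset.sum_le_sum fun σ _ => mul_le_mul_of_nonneg_left (h1 σ) (hc0 σ)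
      _ = _ := by rw [← Finset.sum_mul, hc1, one_mul]
  obtain ⟨y, hy0, hyw, hys⟩ := strong_duality Adj hsym (fun i j => w i j + v i j)
    (fun i j => by simp only [v, hw i j, hx.1 i j]) _ hop
  refine ⟨y, hy0, fun i j h => ?_, fun i j h h0 => ?_, hys⟩
  · have := hyw i j h
    linarith [hv0 i j]
  · have := hyw i j h
    simp only [v, h0, if_true] at this
    linarith

end Half

/-- If the LP relaxation is pointed, then at any fixed point of the natural dynamics the
earnings vector `γ` is an optimal solution of the dual LP: it is dual feasible, its value
equals `∑_e w_e x*_e`, and it minimizes the dual objective. -/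
theorem stmt16 {V : Type*} [Fintype V] [DecidableEq V]
    (Adj : V → V → Prop) [DecidableRel Adj] (w : V → V → ℝ)
    (hG : GoodGraph Adj w) (κ : ℝ) (hκ : κ ∈ Set.Ioo (0 : ℝ) 1)
    (xstar : V → V → ℝ) (hfeas : LPFeasible Adj xstar)
    (hhalf : ∀ i j, Adj i j → xstar i j = 0 ∨ xstar i j = 1 / 2 ∨ xstar i j = 1)
    (ε : ℝ) (hε : 0 < ε)
    (hopt : ∀ x, LPFeasible Adj x → LPobj Adj w x ≤ LPobj Adj w xstar)
    (hgap : ∀ x, LPFeasible Adj x →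
      (∀ i j, Adj i j → x i j = 0 ∨ x i j = 1 / 2 ∨ x i j = 1) →
      (∃ i j, Adj i j ∧ x i j ≠ xstar i j) →
      LPobj Adj w x + ε ≤ LPobj Adj w xstar)
    (α : V → V → ℝ) (hnn : ∀ i j, Adj i j → 0 ≤ α i j)
    (hfp : IsFixedPoint Adj w κ α) :
    (∀ i, 0 ≤ earn Adj w α i) ∧
    (∀ i j, Adj i j → w i j ≤ earn Adj w α i + earn Adj w α j) ∧
    (∑ i, earn Adj w α i = LPobj Adj w xstar) ∧
    (∀ y : V → ℝ, (∀ i, 0 ≤ y i) → (∀ i j, Adj i j → w i j ≤ y i + y j) →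
      ∑ i, earn Adj w α i ≤ ∑ i, y i) := by
  obtain ⟨hsym, hirr, hws, hpos⟩ := id hG
  have hb : ∀ i j, Adj i j → bestAlt Adj w α i j = α i j := by
    intro i j h
    have h1 := hfp i j h
    unfold step at h1
    have h2 : κ * (bestAlt Adj w α i j - α i j) = 0 := by linarith
    rcases mul_eq_zero.1 h2 with h3 | h3
    · exact absurd h3 hκ.1.ne'
    · linarith
  obtain ⟨hcov, hex, hiso, htwo⟩ := fp_facts Adj w α hG hnn hb
  have hγ0 := earn_nonneg Adj w α
  obtain ⟨y, hy0, hyw, hystrict, hys⟩ := strict_dual Adj hsym w xstar hws hfeas ε hε hgap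
  obtain ⟨hcs1, hcs2⟩ := compl_slack Adj hsym w xstar hfeas y hy0 hyw hys
  have hyeq : ∑ i, y i = LPobj Adj w xstar :=
    le_antisymm hys (weak_duality Adj hsym w xstar hfeas y hy0 hyw)
  set γ : V → ℝ := earn Adj w α with hγdef
  have hx0 := hfeas.2.1
  have hsub : ∀ i (s : Finset V), (∀ j ∈ s, Adj i j) → ∑ j ∈ s, xstar i j ≤ 1 := by
    intro i s hs
    refine (Finset.sum_le_sum_of_subset_of_nonneg ?_ ?_).trans (hfeas.2.2 i)
    · intro j hj; simpa using hs j hj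
    · intro j hj _
      exact hx0 i j (by simpa using hj)
  have htwoLe : ∀ i j k, Adj i j → Adj i k → j ≠ k → xstar i j + xstar i k ≤ 1 := by
    intro i j k h1 h2 hne
    have := hsub i {j, k} (by simp [h1, h2])
    rwa [Finset.sum_pair hne] at this
  have hthreeLe : ∀ i j k l, Adj i j → Adj i k → Adj i l → j ≠ k → j ≠ l → k ≠ l →
      xstar i j + (xstar i k + xstar i l) ≤ 1 := by
    intro i j k l h1 h2 h3 hjk hjl hkl
    have := hsub i {j, k, l} (by simp [h1, h2, h3])
    rwa [Finset.sum_insert (by simp [hjk, hjl]), Finset.sum_pair hkl] at this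
  have hge : ∀ i j, Adj i j → 0 < xstar i j → 1 / 2 ≤ xstar i j := by
    intro i j h hp
    rcases hhalf i j h with h1 | h1 | h1 <;> rw [h1] at hp ⊢ <;> linarith
  have hne0 : ∀ i j, Adj i j → xstar i j ≠ 0 → 0 < xstar i j := fun i j h h0 =>
    lt_of_le_of_ne (hx0 i j h) h0.symm
  -- the only support neighbour
  have honly : ∀ i j k, Adj i j → Adj i k → xstar i j = 1 → 0 < xstar i k → k = j := by
    intro i j k h1 h2 h3 h4
    by_contra hne
    have := htwoLe i j k h1 h2 (Ne.symm hne)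
    linarith
  let D : V → ℝ := fun i => γ i - y i
  have hDT : ∀ i j, Adj i j → γ i + γ j ≤ w i j → D i + D j ≤ 0 := by
    intro i j h ht
    have := hyw i j h
    simp only [D]; linarith
  have hDx : ∀ i j, Adj i j → 0 < xstar i j → 0 ≤ D i + D j := by
    intro i j h hp
    have := hcs1 i j h hp
    have := hcov i j h
    simp only [D]; linarith
  let Good : V → Prop := fun i =>
    D i = 0 ∨ ∃ j, Adj i j ∧ α i j + α j i < w i j ∧ γ i + γ j ≤ w i j ∧ xstar i j = 1
  have hgood : ∀ i, Good i := by
    by_contra hcon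
    push Not at hcon
    obtain ⟨i0, hi0⟩ := hcon
    obtain ⟨m, hm, hmax⟩ := Finset.exists_max_image
      (by classical exact Finset.univ.filter fun i => ¬ Good i) (fun i => |D i|)
      ⟨i0, by simpa using hi0⟩
    simp only [Finset.mem_filter, Finset.mem_univ, true_and] at hm hmax
    set t := |D m| with ht
    have htpos : 0 < t := abs_pos.2 fun h => hm (Or.inl h)
    let A : V → Prop := fun i => ¬ Good i ∧ D i = t
    let B : V → Prop := fun i => ¬ Good i ∧ D i = -t
    have hAB : ∀ i, A i → ¬ B i := by
      rintro i ⟨_, h1⟩ ⟨_, h2⟩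
      linarith
    -- tight neighbours of `A` are in `B` and in the support
    have hAT : ∀ i j, A i → Adj i j → γ i + γ j ≤ w i j → B j ∧ 0 < xstar i j := by
      rintro i j ⟨hi, hDi⟩ hij hT
      have h1 := hDT i j hij hT
      have hji := hsym i j hij
      have hTj : γ j + γ i ≤ w j i := by rw [hws j i]; linarith
      have hbj : ¬ Good j := by
        rintro (h | ⟨k, hjk, hs, hTk, hxk⟩)
        · linarith
        · have hik : i = k := hiso j k i hjk hs hji hTj
          subst hik
          apply hi
          right
          exact ⟨j, hij, by rw [hws i j]; linarith, hT, by rw [hfeas.1]; exact hxk⟩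
      have h2 := hmax j hbj
      have h3 := (abs_le.1 h2).1
      have hDj : D j = -t := by linarith
      refine ⟨⟨hbj, hDj⟩, ?_⟩
      refine hne0 i j hij fun h0 => ?_
      have h4 := hystrict i j hij h0
      simp only [D] at hDi hDj
      linarith
    have hBsat : ∀ j, B j →
        ∑ k ∈ Finset.univ.filter (fun k => Adj j k), xstar j k = 1 := by
      rintro j ⟨_, hDj⟩
      apply hcs2
      have := hγ0 j
      simp only [D] at hDj
      linarith
    have hBx : ∀ j k, B j → Adj j k → xstar j k ≠ 0 → A k ∧ γ j + γ k ≤ w j k := by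
      rintro j k ⟨hj, hDj⟩ hjk hne
      have hp := hne0 j k hjk hne
      have h1 := hDx j k hjk hp
      have hkj := hsym j k hjk
      have hbk : ¬ Good k := by
        rintro (h | ⟨l, hkl, hs, hTl, hxl⟩)
        · linarith
        · have hjl : j = l := honly k l j hkl hkj hxl (by rw [hfeas.1]; exact hp)
          subst hjl
          apply hj
          right
          exact ⟨k, hjk, by rw [hws j k]; linarith, by rw [hws j k]; linarith,
            by rw [hfeas.1]; exact hxl⟩
      have h3 := (abs_le.1 (hmax k hbk)).2
      have hDk : D k = t := by linarith
      refine ⟨⟨hbk, hDk⟩, ?_⟩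
      have h4 := hcs1 j k hjk hp
      simp only [D] at hDk hDj
      linarith
    have hApos : ∀ i, A i → 0 < γ i := by
      rintro i ⟨_, hDi⟩
      have := hy0 i
      simp only [D] at hDi
      linarith
    -- every node of `A` has two half edges into `B`, and no other support edge
    have hA2 : ∀ i, A i → ∃ j k, Adj i j ∧ Adj i k ∧ j ≠ k ∧ B j ∧ B k ∧
        0 < xstar i j ∧ 0 < xstar i k := by
      intro i hi
      obtain ⟨j, hij, hT⟩ := hex i (hApos i hi)
      obtain ⟨hBj, hxj⟩ := hAT i j hi hij hT
      have hns : ¬ (α i j + α j i < w i j) := by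
        intro hs
        have hji := hsym i j hij
        have hsj : α j i + α i j < w j i := by rw [hws j i]; linarith
        have hsum := hBsat j hBj
        rw [Finset.sum_eq_single i] at hsum
        · apply hi.1
          right
          exact ⟨j, hij, hs, hT, by rw [hfeas.1]; exact hsum⟩
        · intro k hk hki
          simp only [Finset.mem_filter, Finset.mem_univ, true_and] at hk
          by_contra hne
          exact hki (hiso j i k hji hsj hk (hBx j k hBj hk hne).2)
        · intro h
          exact absurd (by simpa using hji) h
      obtain ⟨k, hkj, hik, hTk⟩ := htwo i j (hApos i hi) hij hT hns
      obtain ⟨hBk, hxk⟩ := hAT i k hi hik hTk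
      exact ⟨j, k, hij, hik, hkj.symm, hBj, hBk, hxj, hxk⟩
    have hAx : ∀ i l, A i → Adj i l → xstar i l ≠ 0 → B l := by
      intro i l hi hil hne
      obtain ⟨j, k, hij, hik, hjk, hBj, hBk, hxj, hxk⟩ := hA2 i hi
      by_cases hlj : l = j
      · rw [hlj]; exact hBj
      by_cases hlk : l = k
      · rw [hlk]; exact hBk
      have h1 := hthreeLe i l j k hil hij hik hlj hlk hjk
      have := hge i j hij hxj
      have := hge i k hik hxk
      have := hne0 i l hil hne
      linarith
    obtain ⟨a, ha⟩ : ∃ a, A a := by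
      rcases abs_choice (D m) with h | h
      · exact ⟨m, hm, by rw [ht, h]⟩
      · have hBm : B m := ⟨hm, by rw [ht, h]; ring⟩
        have h1 := hBsat m hBm
        obtain ⟨k, hk, hne⟩ := Finset.exists_ne_zero_of_sum_ne_zero
          (by rw [h1]; exact one_ne_zero)
        exact ⟨k, (hBx m k hBm (by simpa using hk) hne).1⟩
    obtain ⟨j, k, hij, hik, hjk, hBj, hBk, hxj, hxk⟩ := hA2 a ha
    refine no_half Adj hsym w xstar hfeas hhalf ε hε hopt hgap A B hAB hAx
      (fun j k hj hjk hne => (hBx j k hj hjk hne).1) a j ha hij ?_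
    have := hge a j hij hxj
    have := hge a k hik hxk
    have := htwoLe a j k hij hik hjk
    linarith
  have hsumD : ∑ i, D i = 0 := by
    have h1 : ∑ i, D i = ∑ i, D i * ∑ j ∈ Finset.univ.filter (fun j => Adj i j), xstar i j := by
      refine Finset.sum_congr rfl fun i _ => ?_
      rcases hgood i with h | ⟨j, hij, -, -, hx⟩
      · rw [h, zero_mul]
      · have h2 := hfeas.2.2 i
        have h3 : xstar i j ≤ ∑ j ∈ Finset.univ.filter (fun j => Adj i j), xstar i j :=
          Finset.single_le_sum (f := fun j => xstar i j)
            (fun k hk => hx0 i k (by simpa using hk)) (by simpa using hij)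
        rw [le_antisymm h2 (by linarith), mul_one]
    have h0 : LPobj Adj (fun i j => D i + D j) xstar = LPobj Adj (fun _ _ => 0) xstar := by
      apply LPobj_congr
      intro i j hij
      rw [zero_mul]
      by_cases hz : xstar i j = 0
      · rw [hz, mul_zero]
      have hp := hne0 i j hij hz
      have hle : D i + D j ≤ 0 := by
        rcases hgood i with h | ⟨k, hik, -, hT, hx⟩
        · rcases hgood j with h' | ⟨k, hjk, -, hT, hx⟩
          · linarith
          · have := honly j k i hjk (hsym i j hij) hx (by rw [hfeas.1]; exact hp)
            subst this
            linarith [hDT j i hjk hT]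
        · have := honly i k j hik hij hx hp
          subst this
          exact hDT i j hij hT
      rw [le_antisymm hle (hDx i j hij hp), zero_mul]
    rw [h1, swap_sum Adj hsym xstar hfeas.1 D, h0]
    simp [LPobj_eq]
  have hfinal : ∑ i, γ i = LPobj Adj w xstar := by
    simp only [D, Finset.sum_sub_distrib] at hsumD
    linarith
  refine ⟨hγ0, hcov, hfinal, fun z hz0 hzw => ?_⟩
  rw [hfinal]
  exact weak_duality Adj hsym w xstar hfeas z hz0 hzw
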